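/- Let V be a finite set, I a finite index set, A : I → Finset V a family of subsets of V, σ a permutation of I, and d ≥ 1. Assume that every subset J ⊆ I with the property that A(i) is not a subset of A(j) for all distinct i, j ∈ J (i.e., the sets indexed by J form an antichain under inclusion) satisfies |J| ≤ d. Then the full index set I is Venn-good for σ if and only if every subset J ⊆ I with |J| ≤ max(2, d) is Venn-good for σ. -/

import Mathlib

/-- The Venn cell cardinality `ℓ(J, J')` of a family `A : I → Finset V`:
the number of elements of `V` lying in every set `A i` for `i ∈ J'` and in
no set `A i` for `i ∈ J \ J'`. -/
def vennCard {V I : Type*} [Fintype V] [DecidableEq V] [DecidableEq I]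
    (A : I → Finset V) (J J' : Finset I) : ℕ :=
  ((J'.inf A) \ ((J \ J').sup A)).card

/-- A subset `J` of the index set is *Venn-good* for a permutation `σ` if
`ℓ(J, J') = ℓ(σ(J), σ(J'))` for every nonempty `J' ⊆ J`. -/
def VennGood {V I : Type*} [Fintype V] [DecidableEq V] [DecidableEq I]
    (A : I → Finset V) (σ : Equiv.Perm I) (J : Finset I) : Prop :=
  ∀ J' ⊆ J, J'.Nonempty →
    vennCard A J J' = vennCard A (J.image σ) (J'.image σ)

/-!
Möbius inversion over the intervals of subsets of `J` shows that prescribing the cells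
`ℓ(J, J')` amounts to prescribing the cardinalities of the intersections `⋂_{i ∈ K} A i` for
nonempty `K ⊆ J`. Pairs determine the inclusions among the sets `A i`, so every inclusion
`A i ⊆ A j` persists as `A (σ i) ⊆ A (σ j)`. An intersection does not change when only the
inclusion-minimal sets are kept, one index for each; these form an antichain, so at most `d`
indices remain, and the intersection of their images under `σ` is that of the original ones.
-/

open Finset

section Order

variable {ι α M : Type*}

theorem exists_isAntichain_subset_forall_exists_le [Preorder α] (f : ι → α) (s : Finset ι) :
    ∃ t ⊆ s, IsAntichain (f · ≤ f ·) (t : Set ι) ∧ ∀ i ∈ s, ∃ j ∈ t, f j ≤ f i := by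
  classical
  induction s using Finset.strongInduction with
  | H s ih =>
    by_cases hs : IsAntichain (f · ≤ f ·) (s : Set ι)
    · exact ⟨s, Subset.rfl, hs, fun i hi => ⟨i, hi, le_rfl⟩⟩
    obtain ⟨i, hi, j, hj, hij, hle⟩ :
        ∃ i ∈ s, ∃ j ∈ s, i ≠ j ∧ f i ≤ f j := by
      simpa [IsAntichain, Set.Pairwise] using hs
    obtain ⟨t, hts, ht, hdom⟩ := ih (s.erase j) (erase_ssubset hj)
    refine ⟨t, hts.trans (erase_subset j s), ht, fun k hk => ?_⟩
    obtain rfl | hkj := eq_or_ne k j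
    · obtain ⟨l, hl, hli⟩ := hdom i (mem_erase.2 ⟨hij, hi⟩)
      exact ⟨l, hl, hli.trans hle⟩
    · exact hdom k (mem_erase.2 ⟨hkj, hk⟩)

theorem inf_eq_inf_of_subset_of_forall_exists_le [SemilatticeInf α] [OrderTop α] {f : ι → α}
    {s t : Finset ι} (hts : t ⊆ s) (h : ∀ i ∈ s, ∃ j ∈ t, f j ≤ f i) : t.inf f = s.inf f :=
  le_antisymm (Finset.le_inf fun i hi => let ⟨_, hj, hji⟩ := h i hi; (inf_le hj).trans hji)
    (inf_mono hts)

theorem eq_of_sum_Icc_eq [PartialOrder α] [LocallyFiniteOrder α] [AddCommMonoid M]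
    [IsLeftCancelAdd M] {f g : α → M} {a b : α} (hab : a ≤ b)
    (h : ∀ x ∈ Icc a b, ∑ y ∈ Icc x b, f y = ∑ y ∈ Icc x b, g y) : f a = g a := by
  have hIoc : ∑ y ∈ Ioc a b, f y = ∑ y ∈ Ioc a b, g y := sum_congr rfl fun y hy =>
    have ⟨hay, hyb⟩ := mem_Ioc.1 hy
    eq_of_sum_Icc_eq hyb fun x hx => h x (Icc_subset_Icc_left hay.le hx)
  have hIcc := h a (left_mem_Icc.2 hab)
  rw [← sum_Ioc_add_eq_sum_Icc hab, ← sum_Ioc_add_eq_sum_Icc hab, hIoc] at hIcc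
  exact add_left_cancel hIcc
termination_by #(Icc a b)
decreasing_by exact card_lt_card (Icc_ssubset_Icc_left hab hay le_rfl)

end Order

theorem card_inter_eq_left_iff {α : Type*} [DecidableEq α] {s t : Finset α} :
    #(s ∩ t) = #s ↔ s ⊆ t :=
  ⟨fun h => inter_eq_left.1 (eq_of_subset_of_card_le inter_subset_left h.ge),
    fun h => by rw [inter_eq_left.2 h]⟩

section VennCard

variable {V I : Type*} [Fintype V] [DecidableEq V] [DecidableEq I] {A : I → Finset V}
  {J K : Finset I}

theorem vennCard_image {I' : Type*} [DecidableEq I'] (A : I' → Finset V) {e : I → I'}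
    (he : Function.Injective e) (J K : Finset I) :
    vennCard A (J.image e) (K.image e) = vennCard (A ∘ e) J K := by
  rw [vennCard, vennCard, ← image_sdiff _ _ he, inf_image, sup_image]

theorem mem_inf_sdiff_sup_sdiff_iff (hKJ : K ⊆ J) {x : V} :
    x ∈ K.inf A \ (J \ K).sup A ↔ {i ∈ J | x ∈ A i} = K := by
  simp only [mem_sdiff, Finset.mem_inf, Finset.mem_sup, Finset.ext_iff, mem_filter]
  grind

theorem card_inf_eq_sum_vennCard (A : I → Finset V) (hKJ : K ⊆ J) :
    #(K.inf A) = ∑ L ∈ Icc K J, vennCard A J L := by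
  have hmaps : ((K.inf A : Finset V) : Set V).MapsTo (fun x => {i ∈ J | x ∈ A i}) (Icc K J) :=
    fun x hx => mem_Icc.2 ⟨fun i hi => mem_filter.2 ⟨hKJ hi, mem_inf.1 hx i hi⟩, filter_subset _ _⟩
  rw [card_eq_sum_card_fiberwise hmaps]
  refine sum_congr rfl fun L hL => congrArg card ?_
  obtain ⟨hKL, hLJ⟩ := mem_Icc.1 hL
  ext x
  rw [mem_inf_sdiff_sup_sdiff_iff hLJ, mem_filter, and_iff_right_iff_imp]
  have hinf : L.inf A ⊆ K.inf A := inf_mono hKL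
  exact fun hx => hinf (mem_sdiff.1 ((mem_inf_sdiff_sup_sdiff_iff hLJ).2 hx)).1

end VennCard

/-- Two families of finite sets, possibly on different ground sets, are Venn-equivalent on `J` if
corresponding cells `ℓ(J, J')` with `J'` nonempty have the same size. Venn-goodness for `σ` is
Venn-equivalence of `A` and `A ∘ σ`. -/
def VennEquiv {V W I : Type*} [Fintype V] [DecidableEq V] [Fintype W] [DecidableEq W]
    [DecidableEq I] (A : I → Finset V) (B : I → Finset W) (J : Finset I) : Prop :=
  ∀ K ⊆ J, K.Nonempty → vennCard A J K = vennCard B J K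

theorem vennGood_iff_vennEquiv {V I : Type*} [Fintype V] [DecidableEq V] [DecidableEq I]
    {A : I → Finset V} {σ : Equiv.Perm I} {J : Finset I} :
    VennGood A σ J ↔ VennEquiv A (A ∘ σ) J := by
  simp only [VennGood, VennEquiv, vennCard_image A σ.injective]

section VennEquiv

variable {V W I : Type*} [Fintype V] [DecidableEq V] [Fintype W] [DecidableEq W] [DecidableEq I]
  {A : I → Finset V} {B : I → Finset W} {J K : Finset I}

theorem vennEquiv_iff_card_inf_eq :
    VennEquiv A B J ↔ ∀ K ⊆ J, K.Nonempty → #(K.inf A) = #(K.inf B) := by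
  refine ⟨fun h K hKJ hK => ?_, fun h K hKJ hK => eq_of_sum_Icc_eq hKJ fun L hL => ?_⟩
  · rw [card_inf_eq_sum_vennCard A hKJ, card_inf_eq_sum_vennCard B hKJ]
    refine sum_congr rfl fun L hL => ?_
    obtain ⟨hKL, hLJ⟩ := mem_Icc.1 hL
    exact h L hLJ (hK.mono hKL)
  · obtain ⟨hKL, hLJ⟩ := mem_Icc.1 hL
    rw [← card_inf_eq_sum_vennCard A hLJ, ← card_inf_eq_sum_vennCard B hLJ]
    exact h L hLJ (hK.mono hKL)

theorem VennEquiv.mono (h : VennEquiv A B J) (hKJ : K ⊆ J) : VennEquiv A B K :=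
  vennEquiv_iff_card_inf_eq.2 fun L hLK => vennEquiv_iff_card_inf_eq.1 h L (hLK.trans hKJ)

theorem VennEquiv.card_inf_eq (h : VennEquiv A B J) (hJ : J.Nonempty) :
    #(J.inf A) = #(J.inf B) :=
  vennEquiv_iff_card_inf_eq.1 h J Subset.rfl hJ

theorem VennEquiv.subset_iff_subset {i j : I} (h : VennEquiv A B {i, j}) :
    A i ⊆ A j ↔ B i ⊆ B j := by
  have hi : #(A i) = #(B i) := by
    simpa using (h.mono (K := {i}) (by simp)).card_inf_eq (singleton_nonempty i)
  have hij : #(A i ∩ A j) = #(B i ∩ B j) := by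
    simpa using h.card_inf_eq (insert_nonempty i {j})
  rw [← card_inter_eq_left_iff, ← card_inter_eq_left_iff, hi, hij]

theorem vennGood_iff_small_subsets_general {d : ℕ}
    (hanti : ∀ K ⊆ J, IsAntichain (A · ⊆ A ·) (K : Set I) → #K ≤ d) :
    VennEquiv A B J ↔ ∀ K ⊆ J, #K ≤ max 2 d → VennEquiv A B K := by
  refine ⟨fun h K hKJ _ => h.mono hKJ, fun h => vennEquiv_iff_card_inf_eq.2 fun K hKJ hK => ?_⟩
  have hsub : ∀ i ∈ K, ∀ j ∈ K, A i ⊆ A j → B i ⊆ B j := fun i hi j hj =>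
    (h {i, j} (by grind) (card_le_two.trans (le_max_left 2 d))).subset_iff_subset.1
  obtain ⟨L, hLK, hL, hdom⟩ := exists_isAntichain_subset_forall_exists_le A K
  have hdomB : ∀ i ∈ K, ∃ j ∈ L, B j ⊆ B i := fun i hi =>
    let ⟨j, hj, hji⟩ := hdom i hi
    ⟨j, hj, hsub j (hLK hj) i hi hji⟩
  have hLne : L.Nonempty := let ⟨i, hi⟩ := hK; let ⟨j, hj, _⟩ := hdom i hi; ⟨j, hj⟩
  have hLJ : L ⊆ J := hLK.trans hKJ
  rw [← inf_eq_inf_of_subset_of_forall_exists_le hLK hdom,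
    ← inf_eq_inf_of_subset_of_forall_exists_le hLK hdomB]
  exact (h L hLJ ((hanti L hLJ hL).trans (le_max_right 2 d))).card_inf_eq hLne

end VennEquiv

/-- If every inclusion-antichain in the family `A` has at most `d ≥ 1` members,
then the full index set is Venn-good for `σ` iff every subset of size at most
`max 2 d` is Venn-good for `σ`. -/
theorem vennGood_iff_small_subsets {V I : Type*}
    [Fintype V] [DecidableEq V] [Fintype I] [DecidableEq I]
    (A : I → Finset V) (σ : Equiv.Perm I) (d : ℕ) (hd : 1 ≤ d)
    (hanti : ∀ J : Finset I,
      (∀ i ∈ J, ∀ j ∈ J, i ≠ j → ¬ A i ⊆ A j) → J.card ≤ d) :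
    VennGood A σ Finset.univ ↔
      ∀ J : Finset I, J.card ≤ max 2 d → VennGood A σ J := by
  simp only [vennGood_iff_vennEquiv]
  simpa using vennGood_iff_small_subsets_general (J := univ) fun J _ hJ =>
    hanti J fun _ hi _ hj => hJ hi hj
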